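/- Let S be a factorizable inverse monoid with group of units G and natural connection θ, and let e be an idempotent of S. Then N_e = {g ∈ G : g⁻¹eg = e} is a subgroup of G, eθ ∩ N_e is a normal subgroup of N_e, and the maximal subgroup H_e of S at e (the Green H-class of S containing e, i.e. the group of units of eS when e is central, and in general {x ∈ S : x x⁻¹ = x⁻¹ x = e}) is isomorphic to the quotient group N_e/(eθ ∩ N_e). -/

import Mathlib

/-- An inverse monoid: a monoid in which every element `a` has an inverse `a⁻¹`
satisfying `a * a⁻¹ * a = a` and `a⁻¹ * a * a⁻¹ = a⁻¹`, and this inverse is unique. -/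
class InverseMonoid (S : Type*) extends Monoid S, Inv S where
  mul_inv_mul : ∀ a : S, a * a⁻¹ * a = a
  inv_mul_inv : ∀ a : S, a⁻¹ * a * a⁻¹ = a⁻¹
  inv_unique : ∀ a b : S, a * b * a = a → b * a * b = b → b = a⁻¹

/-- An inverse monoid with a (two-sided absorbing) zero element. -/
class InverseMonoidWithZero (S : Type*) extends InverseMonoid S, Zero S where
  zero_mul : ∀ a : S, 0 * a = 0
  mul_zero : ∀ a : S, a * 0 = 0

/-- The natural partial order on an inverse monoid: `a ≤ b` iff `a = e * b`
for some idempotent `e`. -/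
def NatLe {S : Type*} [Monoid S] (a b : S) : Prop :=
  ∃ e : S, IsIdempotentElem e ∧ a = e * b

/-- The filter `e↑ = {s | e ≤ s}` generated by `e`. -/
def upfilter {S : Type*} [Monoid S] (e : S) : Set S := {s | NatLe e s}

/-- `c` is central in (a subset) `T`: it belongs to `T` and commutes with all elements of `T`. -/
def CentralIn {S : Type*} [Mul S] (T : Set S) (c : S) : Prop :=
  c ∈ T ∧ ∀ s ∈ T, c * s = s * c

/-- A monoid is factorizable if every element is a product of an idempotent and a unit. -/
def Factorizable (S : Type*) [Monoid S] : Prop :=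
  ∀ s : S, ∃ e g : S, IsIdempotentElem e ∧ IsUnit g ∧ s = e * g

/-- The natural connection `θ`: for an (idempotent) `e`, the subgroup
`eθ = {g ∈ G : e * g = e}` of the group of units. -/
def natconn {S : Type*} [Monoid S] (e : S) : Subgroup Sˣ where
  carrier := {g : Sˣ | e * (g : S) = e}
  one_mem' := by simp
  mul_mem' := by
    intro a b ha hb
    simp only [Set.mem_setOf_eq, Units.val_mul] at *
    rw [← mul_assoc, ha, hb]
  inv_mem' := by
    intro a ha
    simp only [Set.mem_setOf_eq] at *
    nth_rewrite 1 [← ha]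
    rw [mul_assoc, ← Units.val_mul, mul_inv_cancel, Units.val_one, mul_one]

/-- The natural connection is a dual isomorphism from the idempotents onto a
sublattice of the lattice of subgroups of the group of units: it is injective on
idempotents, order-reversing in both directions, and its image is closed under
joins and meets of subgroups. -/
def NatconnDualIso (S : Type*) [Monoid S] : Prop :=
  (∀ e f : S, IsIdempotentElem e → IsIdempotentElem f → natconn e = natconn f → e = f) ∧
  (∀ e f : S, IsIdempotentElem e → IsIdempotentElem f →
    (NatLe e f ↔ natconn f ≤ natconn e)) ∧
  (∀ e f : S, IsIdempotentElem e → IsIdempotentElem f →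
    (∃ h : S, IsIdempotentElem h ∧ natconn h = natconn e ⊔ natconn f) ∧
    (∃ h : S, IsIdempotentElem h ∧ natconn h = natconn e ⊓ natconn f))

/-- `j` is the join (least upper bound) of `e` and `f` with respect to the natural order. -/
def IsNatJoin {S : Type*} [Monoid S] (e f j : S) : Prop :=
  NatLe e j ∧ NatLe f j ∧ ∀ x : S, NatLe e x → NatLe f x → NatLe j x

/-- `F_{e,f} = f · e↑`. -/
def Fef {S : Type*} [Monoid S] (e f : S) : Set S := (f * ·) '' upfilter e

/-- `UF_{e,f}`: the group of units of the monoid `F_{e,f}` (whose identity is `f`). -/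
def UFef {S : Type*} [Monoid S] (e f : S) : Set S :=
  {x ∈ Fef e f | ∃ y ∈ Fef e f, x * y = f ∧ y * x = f}

/-- The centre of a subset `T`. -/
def ZIn {S : Type*} [Mul S] (T : Set S) : Set S := {x ∈ T | ∀ y ∈ T, x * y = y * x}

/-- Two subsets are isomorphic as semigroups (with the induced multiplication). -/
def SubIso {S : Type*} [Mul S] (A B : Set S) : Prop :=
  ∃ φ : S → S, Set.BijOn φ A B ∧ ∀ a ∈ A, ∀ b ∈ A, φ (a * b) = φ a * φ b

/-- A subcentral idempotent series between `0` and `a`. -/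
def IsSubcentralSeriesBetween {S : Type*} [Monoid S] [Zero S] (n : ℕ) (c : ℕ → S) (a : S) :
    Prop :=
  c 0 = 0 ∧ c n = a ∧ (∀ i ≤ n, IsIdempotentElem (c i)) ∧
    ∀ i < n, CentralIn (upfilter (c i)) (c (i + 1))

/-- A subcentral idempotent series of `S` (between `0` and `1`). -/
def IsSubcentralSeries {S : Type*} [Monoid S] [Zero S] (n : ℕ) (c : ℕ → S) : Prop :=
  IsSubcentralSeriesBetween n c 1

/-- A central idempotent series of `S`. -/
def IsCentralSeries {S : Type*} [Monoid S] [Zero S] (n : ℕ) (c : ℕ → S) : Prop :=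
  c 0 = 0 ∧ c n = 1 ∧ (∀ i ≤ n, IsIdempotentElem (c i)) ∧
    (∀ i < n, NatLe (c i) (c (i + 1))) ∧
    ∀ i < n, CentralIn Set.univ (c (i + 1))

/-- A subcentral idempotent: one occurring in some subcentral idempotent series of `S`. -/
def IsSubcentralIdem {S : Type*} [Monoid S] [Zero S] (e : S) : Prop :=
  ∃ (n : ℕ) (c : ℕ → S), IsSubcentralSeries n c ∧ ∃ i ≤ n, c i = e

/-- A `G`-nilpotent series: a chain of central idempotents from `0` to `1` with
`F_{eᵢ,eᵢ₊₁} ⊆ Z(F_{0,eᵢ₊₁})`. -/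
def GNilpotentSeries {S : Type*} [Monoid S] [Zero S] (n : ℕ) (c : ℕ → S) : Prop :=
  c 0 = 0 ∧ c n = 1 ∧ (∀ i ≤ n, IsIdempotentElem (c i) ∧ CentralIn Set.univ (c i)) ∧
    (∀ i < n, NatLe (c i) (c (i + 1))) ∧
    ∀ i < n, Fef (c i) (c (i + 1)) ⊆ ZIn (Fef 0 (c (i + 1)))

/-- A `G`-solvable series: a chain of central idempotents from `0` to `1` with
each `F_{eᵢ,eᵢ₊₁}` commutative. -/
def GSolvableSeries {S : Type*} [Monoid S] [Zero S] (n : ℕ) (c : ℕ → S) : Prop :=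
  c 0 = 0 ∧ c n = 1 ∧ (∀ i ≤ n, IsIdempotentElem (c i) ∧ CentralIn Set.univ (c i)) ∧
    (∀ i < n, NatLe (c i) (c (i + 1))) ∧
    ∀ i < n, ∀ x ∈ Fef (c i) (c (i + 1)), ∀ y ∈ Fef (c i) (c (i + 1)), x * y = y * x

/-- `S` is `G`-nilpotent. -/
def GNilpotent (S : Type*) [Monoid S] [Zero S] : Prop :=
  ∃ (n : ℕ) (c : ℕ → S), GNilpotentSeries n c

/-- `S` is `G`-solvable. -/
def GSolvable (S : Type*) [Monoid S] [Zero S] : Prop :=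
  ∃ (n : ℕ) (c : ℕ → S), GSolvableSeries n c

/-- Two idempotent series are isomorphic: same length, and a one-to-one correspondence
between their factors under which corresponding factors are isomorphic. -/
def SeriesIso {S : Type*} [Monoid S] (n : ℕ) (c : ℕ → S) (n' : ℕ) (d : ℕ → S) : Prop :=
  n = n' ∧ ∃ σ : ℕ → ℕ, Set.BijOn σ {i | i < n} {i | i < n'} ∧
    ∀ i < n, SubIso (Fef (c i) (c (i + 1))) (Fef (d (σ i)) (d (σ i + 1)))

/-- A composition series (for a kind `P` of series): it has no repeated terms, and any
refinement of it (of the same kind) only repeats its terms. -/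
def IsCompositionOf {S : Type*} (P : ℕ → (ℕ → S) → Prop) (n : ℕ) (c : ℕ → S) : Prop :=
  P n c ∧ (∀ i ≤ n, ∀ j ≤ n, c i = c j → i = j) ∧
    ∀ (m : ℕ) (d : ℕ → S), P m d → (∀ i ≤ n, ∃ j ≤ m, d j = c i) →
      ∀ j ≤ m, ∃ i ≤ n, d j = c i

/-!
Right multiplication of `e` by units sends `G` onto the elements `x` with `x * x⁻¹ = e`: by
factorizability every `x` has the form `(x * x⁻¹) * g` with `g` a unit. Since
`(e * g)⁻¹ * (e * g) = g⁻¹ * e * g`, the element `e * g` lies in `H_e` exactly when `g` commutes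
with `e`, that is, when `g ∈ N_e`. On `N_e` the map `g ↦ e * g` is multiplicative because `e`
can be moved past `g`, and `e * a = e * b` holds iff `a⁻¹ * b` fixes `e`, that is, lies in `eθ`.
-/

section Monoid

variable {M : Type*} [Monoid M]

theorem mem_natconn {a : M} {g : Mˣ} : g ∈ natconn a ↔ a * g = a := Iff.rfl

/-- The subgroup `N_a` of the units commuting with `a`. For units this is the same condition as
`g⁻¹ * a * g = a`, see `coe_unitsCentralizer`. -/
def unitsCentralizer (a : M) : Subgroup Mˣ := (Submonoid.centralizer {a}).units

theorem mem_unitsCentralizer {a : M} {g : Mˣ} : g ∈ unitsCentralizer a ↔ Commute a g := by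
  simp only [unitsCentralizer, Submonoid.mem_units_iff, Submonoid.mem_centralizer_iff,
    Set.mem_singleton_iff, forall_eq]
  exact and_iff_left_of_imp Commute.units_inv_right

theorem coe_unitsCentralizer (a : M) :
    (unitsCentralizer a : Set Mˣ) = {g : Mˣ | (↑g⁻¹ : M) * a * g = a} := by
  ext g
  rw [SetLike.mem_coe, mem_unitsCentralizer, Set.mem_ofPred_eq, mul_assoc,
    Units.inv_mul_eq_iff_eq_mul, commute_iff_eq]

theorem unitsCentralizer_le_normalizer_natconn (a : M) :
    unitsCentralizer a ≤ Subgroup.normalizer (natconn a : Set Mˣ) := by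
  intro g hg
  have hag : a * g = g * a := mem_unitsCentralizer.1 hg
  refine Subgroup.mem_normalizer_iff.2 fun x => ?_
  have hconj : a * ↑(g * x * g⁻¹) = g * (a * x) * ↑g⁻¹ := by
    simp only [Units.val_mul, ← mul_assoc, hag]
  rw [mem_natconn, mem_natconn, hconj, Units.mul_inv_eq_iff_eq_mul, hag, Units.mul_right_inj]

theorem inv_mul_mem_natconn_iff {a : M} {g : Mˣ} (hag : Commute a g) (h : Mˣ) :
    g⁻¹ * h ∈ natconn a ↔ a * g = a * h := by
  rw [mem_natconn, Units.val_mul, ← mul_assoc, hag.units_inv_right.eq, mul_assoc,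
    Units.inv_mul_eq_iff_eq_mul, ← hag.eq, eq_comm]

end Monoid

theorem idempotent_mul_mul_of_commute {M : Type*} [Semigroup M] {e a : M}
    (he : IsIdempotentElem e) (hea : Commute e a) (b : M) : e * (a * b) = e * a * (e * b) := by
  rw [mul_assoc, ← mul_assoc a, ← hea.eq, mul_assoc, he.mul_self_mul]

namespace InverseMonoid

variable {S : Type*} [InverseMonoid S] {e : S}

theorem inv_idempotent_mul_unit (he : IsIdempotentElem e) (g : Sˣ) :
    (e * (g : S))⁻¹ = ↑g⁻¹ * e := by
  refine (inv_unique _ _ ?_ ?_).symm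
  · calc e * g * (↑g⁻¹ * e) * (e * g) = e * (g * ↑g⁻¹) * (e * e) * g := by simp only [mul_assoc]
      _ = e * g := by rw [Units.mul_inv, mul_one, he.eq, he.eq]
  · calc ↑g⁻¹ * e * (e * g) * (↑g⁻¹ * e) = ↑g⁻¹ * (e * e) * (g * ↑g⁻¹) * e := by
          simp only [mul_assoc]
      _ = ↑g⁻¹ * e := by rw [Units.mul_inv, mul_one, he.eq, he.mul_mul_self]

theorem idempotent_mul_unit_mul_inv (he : IsIdempotentElem e) (g : Sˣ) :
    e * (g : S) * (e * (g : S))⁻¹ = e := by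
  rw [inv_idempotent_mul_unit he, mul_assoc, Units.mul_inv_cancel_left, he.eq]

theorem inv_mul_idempotent_mul_unit (he : IsIdempotentElem e) (g : Sˣ) :
    (e * (g : S))⁻¹ * (e * (g : S)) = ↑g⁻¹ * e * g := by
  rw [inv_idempotent_mul_unit he, mul_assoc, he.mul_self_mul, mul_assoc]

/-- The maximal subgroup `H_e` of `S` at `e`, as a set. The two equations describe the Green
`H`-class of `e` when `e` is idempotent; otherwise no element satisfies them. -/
def maximalSubgroup (e : S) : Set S := {x : S | x * x⁻¹ = e ∧ x⁻¹ * x = e}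

theorem idempotent_mul_unit_mem_maximalSubgroup_iff (he : IsIdempotentElem e) (g : Sˣ) :
    e * (g : S) ∈ maximalSubgroup e ↔ g ∈ unitsCentralizer e := by
  rw [maximalSubgroup, Set.mem_ofPred_eq, and_iff_right (idempotent_mul_unit_mul_inv he g),
    inv_mul_idempotent_mul_unit he, ← SetLike.mem_coe, coe_unitsCentralizer, Set.mem_ofPred_eq]

theorem exists_mul_inv_mul_unit_eq (hfact : Factorizable S) (x : S) :
    ∃ g : Sˣ, x * x⁻¹ * g = x := by
  obtain ⟨f, _, hf, ⟨g, rfl⟩, rfl⟩ := hfact x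
  exact ⟨g, by rw [idempotent_mul_unit_mul_inv hf]⟩

theorem image_unitsCentralizer_eq_maximalSubgroup (hfact : Factorizable S)
    (he : IsIdempotentElem e) :
    (fun g : Sˣ => e * (g : S)) '' unitsCentralizer e = maximalSubgroup e := by
  refine Set.Subset.antisymm ?_ fun x hx => ?_
  · rintro _ ⟨g, hg, rfl⟩
    exact (idempotent_mul_unit_mem_maximalSubgroup_iff he g).2 hg
  · obtain ⟨g, hg⟩ := exists_mul_inv_mul_unit_eq hfact x
    rw [hx.1] at hg
    exact ⟨g, (idempotent_mul_unit_mem_maximalSubgroup_iff he g).1 (hg ▸ hx), hg⟩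

end InverseMonoid

/-- For an idempotent `e` of a factorizable inverse monoid `S`,
`N_e = {g ∈ G : g⁻¹eg = e}` is a subgroup of the group of units `G`, `eθ ∩ N_e` is a
normal subgroup of `N_e`, and the maximal subgroup `H_e = {x : x x⁻¹ = x⁻¹ x = e}` is
isomorphic to the quotient group `N_e/(eθ ∩ N_e)` (expressed via a multiplicative
surjection `N_e → H_e` whose fibres are exactly the cosets of `eθ ∩ N_e`). -/
theorem stmt_14 {S : Type*} [InverseMonoid S] (hfact : Factorizable S)
    (e : S) (he : IsIdempotentElem e) :
    ∃ N : Subgroup Sˣ, (N : Set Sˣ) = {g : Sˣ | (↑g⁻¹ : S) * e * (↑g : S) = e} ∧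
      (∀ x ∈ natconn e ⊓ N, ∀ g ∈ N, g * x * g⁻¹ ∈ natconn e ⊓ N) ∧
      ∃ φ : Sˣ → S,
        (φ '' (N : Set Sˣ) = {x : S | x * x⁻¹ = e ∧ x⁻¹ * x = e}) ∧
        (∀ a ∈ N, ∀ b ∈ N, φ (a * b) = φ a * φ b) ∧
        (∀ a ∈ N, ∀ b ∈ N, (φ a = φ b ↔ a⁻¹ * b ∈ natconn e ⊓ N)) := by
  refine ⟨unitsCentralizer e, coe_unitsCentralizer e, fun x hx g hg => ⟨?_, ?_⟩,
    fun g => e * (g : S), InverseMonoid.image_unitsCentralizer_eq_maximalSubgroup hfact he,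
    fun a ha b _ => ?_, fun a ha b hb => ?_⟩
  · have hg_normalizes := unitsCentralizer_le_normalizer_natconn e hg
    exact (Subgroup.mem_normalizer_iff.1 hg_normalizes x).1 hx.1
  · exact mul_mem (mul_mem hg hx.2) ((unitsCentralizer e).inv_mem hg)
  · exact idempotent_mul_mul_of_commute he (mem_unitsCentralizer.1 ha) b
  · rw [Subgroup.mem_inf, and_iff_left (mul_mem (inv_mem ha) hb)]
    exact (inv_mul_mem_natconn_iff (mem_unitsCentralizer.1 ha) b).symm
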